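/- arXiv:2404.05172 — 4 statements merged into one kernel-verified Lean document; each statement's English description precedes it below -/
import Mathlib

section
/- Let V be a finite set of vertices, E ⊆ V × V a set of directed edges with a cost function c : E → ℝ with c(e) ≥ 0, let k ≥ 1 be a natural number, and let P_1, …, P_k ⊆ E be k edge sets (paths). Let W = ∑_{e ∈ ⋃_i P_i} c(e). Then either (i) there exists an edge e ∈ E with |{i : e ∈ P_i}| ≥ √k, or (ii) there exists an index i with ∑_{e ∈ P_i} c(e) ≤ W / √k. -/
/-!
Double counting. If every edge lies on fewer than `√k` of the sets `P i`, then the sum over `i` of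
the cost of `P i` counts each edge of the union fewer than `√k` times, so it is at most `√k * W`.
If moreover every `P i` cost more than `W / √k`, the same sum would exceed `k * (W / √k) = √k * W`.
-/

/-- Let `V` be a finite vertex set, `E ⊆ V × V` a set of directed edges
with nonnegative costs `c`, `k ≥ 1`, and `P 1, …, P k ⊆ E` edge sets (paths).  With
`W = ∑_{e ∈ ⋃ i, P i} c e`, either some edge `e ∈ E` lies in at least `√k` of the sets
`P i`, or some `P i` has total cost at most `W / √k`. -/
theorem stmt3 {V : Type*} [Fintype V] [DecidableEq V]
    (E : Finset (V × V)) (c : V × V → ℝ) (hc : ∀ e ∈ E, 0 ≤ c e)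
    (k : ℕ) (hk : 1 ≤ k) (P : Fin k → Finset (V × V)) (hP : ∀ i, P i ⊆ E) :
    (∃ e ∈ E, Real.sqrt k ≤ ((Finset.univ.filter fun i => e ∈ P i).card : ℝ)) ∨
    (∃ i, ∑ e ∈ P i, c e ≤ (∑ e ∈ Finset.univ.biUnion P, c e) / Real.sqrt k) := by
  by_contra! h
  obtain ⟨hfew, hcost⟩ := h
  set U := Finset.univ.biUnion P with hU
  have hUE : U ⊆ E := Finset.biUnion_subset.2 fun i _ => hP i
  have hcount : ∑ i, ∑ e ∈ P i, c e =
      ∑ e ∈ U, ((Finset.univ.filter fun i => e ∈ P i).card : ℝ) * c e := by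
    rw [Finset.sum_comm' (t' := U) (s' := fun e => Finset.univ.filter fun i => e ∈ P i)]
    · simp
    · intro i e
      simp only [hU, Finset.mem_univ, true_and, Finset.mem_filter, Finset.mem_biUnion]
      exact ⟨fun he => ⟨he, i, he⟩, fun he => he.1⟩
  have hupper : ∑ i, ∑ e ∈ P i, c e ≤ Real.sqrt k * ∑ e ∈ U, c e := by
    rw [hcount, Finset.mul_sum]
    exact Finset.sum_le_sum fun e he =>
      mul_le_mul_of_nonneg_right (hfew e (hUE he)).le (hc e (hUE he))
  have hlower : ∑ _i : Fin k, (∑ e ∈ U, c e) / Real.sqrt k < ∑ i, ∑ e ∈ P i, c e :=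
    Finset.sum_lt_sum_of_nonempty ⟨⟨0, hk⟩, Finset.mem_univ _⟩ fun i _ => hcost i
  have hconst : ∑ _i : Fin k, (∑ e ∈ U, c e) / Real.sqrt k = Real.sqrt k * ∑ e ∈ U, c e := by
    rw [Finset.sum_const, Finset.card_univ, Fintype.card_fin, nsmul_eq_mul, mul_div_left_comm,
      Real.div_sqrt, mul_comm]
  linarith
end

section
/- Let n ≥ 2 be a natural number, θ > 0 and ℓ_min > 0 real numbers, and set Δ = θ·ℓ_min/(n−1). Let E be a set of edges with lengths ℓ : E → ℝ and scaled lengths ℓ̄(e) = Δ·⌈ℓ(e)/Δ⌉. Let d be a nonzero real number with |d| ≥ ℓ_min, and let sign(d) be 1 if d > 0 and −1 if d < 0. Then for every finite list P of at most n−1 edges: (i) if ∑_{e∈P} ℓ(e) ≤ d, then ∑_{e∈P} ℓ̄(e) ≤ (1 + θ·sign(d))·d; and (ii) if ∑_{e∈P} ℓ̄(e) ≤ (1 + θ·sign(d))·d, then ∑_{e∈P} ℓ(e) ≤ (1 + θ·sign(d))·d. -/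
/-!
Rounding up to a multiple of `Δ` never decreases a length and increases it by at most `Δ`, so on a
list of at most `n - 1` edges the total grows by at most `(n - 1) * Δ = θ * ℓmin ≤ θ * |d|`
(`sum_le_sum_scaled`, `sum_scaled_le`). Since `sgn * d = |d|`, the relaxed budget
`(1 + θ * sgn) * d` equals `d + θ * |d|`, which absorbs this growth.
-/

theorem sum_le_sum_scaled {E : Type*} (ℓ : E → ℝ) {Δ : ℝ} (hΔ : 0 < Δ) (P : List E) :
    (P.map ℓ).sum ≤ (P.map fun e => Δ * (⌈ℓ e / Δ⌉ : ℝ)).sum := by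
  refine List.sum_le_sum fun e _ => ?_
  have h := Int.le_ceil (ℓ e / Δ)
  rwa [div_le_iff₀' hΔ] at h

theorem sum_scaled_le {E : Type*} (ℓ : E → ℝ) {Δ : ℝ} (hΔ : 0 < Δ) (P : List E) :
    (P.map fun e => Δ * (⌈ℓ e / Δ⌉ : ℝ)).sum ≤ (P.map ℓ).sum + P.length * Δ := by
  induction P with
  | nil => simp
  | cons e P ih =>
    have h : Δ * (⌈ℓ e / Δ⌉ : ℝ) ≤ ℓ e + Δ := by
      have h1 := mul_le_mul_of_nonneg_left (Int.ceil_lt_add_one (ℓ e / Δ)).le hΔ.le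
      rwa [mul_add, mul_one, mul_div_cancel₀ _ hΔ.ne'] at h1
    simp only [List.map_cons, List.sum_cons, List.length_cons, Nat.cast_add, Nat.cast_one]
    linarith

/-- With `n ≥ 2`, `θ > 0`, `ℓmin > 0`, `Δ = θ·ℓmin/(n−1)`, scaled
lengths `ℓ̄ e = Δ·⌈ℓ e / Δ⌉`, a nonzero budget `d` with `|d| ≥ ℓmin`, and
`sign d = 1` if `d > 0` and `−1` if `d < 0`:  for every list `P` of at most `n − 1`
edges, (i) if `∑_{e∈P} ℓ e ≤ d` then `∑_{e∈P} ℓ̄ e ≤ (1 + θ·sign d)·d`; and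
(ii) if `∑_{e∈P} ℓ̄ e ≤ (1 + θ·sign d)·d` then `∑_{e∈P} ℓ e ≤ (1 + θ·sign d)·d`. -/
theorem stmt8 {E : Type*} (n : ℕ) (hn : 2 ≤ n) (θ ℓmin : ℝ)
    (hθ : 0 < θ) (hmin : 0 < ℓmin) (ℓ : E → ℝ)
    (d : ℝ) (hd : d ≠ 0) (hdmin : ℓmin ≤ |d|)
    (P : List E) (hP : P.length ≤ n - 1) :
    let Δ : ℝ := θ * ℓmin / ((n : ℝ) - 1)
    let ℓbar : E → ℝ := fun e => Δ * (⌈ℓ e / Δ⌉ : ℝ)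
    let sgn : ℝ := if 0 < d then 1 else -1
    ((P.map ℓ).sum ≤ d → (P.map ℓbar).sum ≤ (1 + θ * sgn) * d) ∧
      ((P.map ℓbar).sum ≤ (1 + θ * sgn) * d → (P.map ℓ).sum ≤ (1 + θ * sgn) * d) := by
  intro Δ ℓbar sgn
  have hn' : (0 : ℝ) < (n : ℝ) - 1 := by
    have : (2 : ℝ) ≤ n := by exact_mod_cast hn
    linarith
  have hΔ : 0 < Δ := div_pos (mul_pos hθ hmin) hn'
  have hlen : (P.length : ℝ) ≤ (n : ℝ) - 1 := by
    have h : P.length + 1 ≤ n := by omega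
    have h' : (P.length : ℝ) + 1 ≤ n := by exact_mod_cast h
    linarith
  have hsgn : sgn * d = |d| := by
    by_cases h : 0 < d
    · simp [sgn, h, abs_of_pos h]
    · simp [sgn, h, abs_of_nonpos (not_lt.mp h)]
  have hbudget : (1 + θ * sgn) * d = d + θ * |d| := by
    rw [← hsgn]; ring
  have hgrowth : (P.length : ℝ) * Δ ≤ θ * |d| :=
    calc (P.length : ℝ) * Δ ≤ ((n : ℝ) - 1) * Δ := mul_le_mul_of_nonneg_right hlen hΔ.le
      _ = θ * ℓmin := mul_div_cancel₀ _ hn'.ne'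
      _ ≤ θ * |d| := mul_le_mul_of_nonneg_left hdmin hθ.le
  refine ⟨fun h => ?_, (sum_le_sum_scaled ℓ hΔ P).trans⟩
  rw [hbudget]
  have := sum_scaled_le ℓ hΔ P
  exact this.trans (add_le_add h hgrowth)
end

section
/- Let G be a finite directed graph on n ≥ 2 vertices with edge set E, edge costs c : E → ℝ with c(e) ≥ 0, and, for i = 1,…,m, edge weights w_i : E → ℝ, budgets L_i ≠ 0, and tolerances ε_i with ε_i·L_i > 0. Set Δ_i = ε_i·L_i/(n−1) (so Δ_i > 0) and define the scaled weights w̄_i(e) = Δ_i·⌈w_i(e)/Δ_i⌉. Call an s–t path P (a walk with no repeated vertices, hence with at most n−1 edges) originally feasible if ∑_{e∈P} w_i(e) ≤ L_i for all i, and scaled-feasible if ∑_{e∈P} w̄_i(e) ≤ (1+ε_i)·L_i for all i. Then: (a) every originally feasible s–t path is scaled-feasible; (b) every scaled-feasible s–t path Q satisfies ∑_{e∈Q} w_i(e) ≤ (1+ε_i)·L_i for all i. Consequently, if an originally feasible s–t path exists then a scaled-feasible s–t path exists, and any scaled-feasible s–t path of minimum cost has cost at most the minimum cost of an originally feasible s–t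 path while violating each budget L_i by at most a factor 1+ε_i. -/
/-!
Rounding a weight up to a multiple of `Δ i` never decreases it and increases it by at most
`Δ i`. Never decreasing gives (b). For (a), a path without repeated vertices has at most `n - 1`
edges, so its total weight grows by at most `(n - 1) * Δ i = ε i * L i`, which is exactly the
relaxation of the budget. The remaining claims follow: by (a) every originally feasible path
competes in the scaled minimization.
-/

theorem le_roundUp {d : ℝ} (hd : 0 < d) (x : ℝ) : x ≤ d * (⌈x / d⌉ : ℝ) := by
  rw [← div_le_iff₀' hd]
  exact Int.le_ceil _

theorem roundUp_le {d : ℝ} (hd : 0 < d) (x : ℝ) : d * (⌈x / d⌉ : ℝ) ≤ x + d := by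
  calc d * (⌈x / d⌉ : ℝ) ≤ d * (x / d + 1) :=
        mul_le_mul_of_nonneg_left (Int.ceil_lt_add_one _).le hd.le
    _ = x + d := by field_simp

theorem sum_map_le_add_length_mul {α : Type*} (f g : α → ℝ) (d : ℝ)
    (h : ∀ a, f a ≤ g a + d) (l : List α) :
    (l.map f).sum ≤ (l.map g).sum + l.length * d := by
  induction l with
  | nil => simp
  | cons a l ih =>
    simp only [List.map_cons, List.sum_cons, List.length_cons, Nat.cast_add, Nat.cast_one]
    linarith [h a]

/-- Scaling lemma for `m`-dimensional resource-constrained shortest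
paths.  A path from `s` to `t` is modelled as a list of vertices with head `s`, last
vertex `t`, no repeated vertices, and consecutive vertices joined by edges of `E`;
its edges are the consecutive pairs.  (a) Every originally feasible `s–t` path is
scaled-feasible; (b) every scaled-feasible `s–t` path satisfies each original budget
up to a factor `1 + ε i`; consequently, if an originally feasible path exists then a
scaled-feasible one exists, and any minimum-cost scaled-feasible path has cost at most
the cost of every originally feasible path while violating each budget `L i` by at
most a factor `1 + ε i`. -/
theorem stmt9 {V : Type*} [Fintype V] [DecidableEq V]
    (n : ℕ) (hn : 2 ≤ n) (hcard : Fintype.card V = n)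
    (E : Finset (V × V)) (c : V × V → ℝ) (hc : ∀ e ∈ E, 0 ≤ c e)
    (m : ℕ) (w : Fin m → V × V → ℝ) (L ε : Fin m → ℝ)
    (hL : ∀ i, L i ≠ 0) (hεL : ∀ i, 0 < ε i * L i) (s t : V) :
    let Δ : Fin m → ℝ := fun i => ε i * L i / ((n : ℝ) - 1)
    let wbar : Fin m → V × V → ℝ := fun i e => Δ i * (⌈w i e / Δ i⌉ : ℝ)
    let IsPath : List V → Prop := fun vs =>
      vs.head? = some s ∧ vs.getLast? = some t ∧ vs.Nodup ∧
        vs.Chain' fun u v => (u, v) ∈ E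
    let cost : List V → ℝ := fun vs => ((vs.zip vs.tail).map c).sum
    let origFeas : List V → Prop := fun vs =>
      ∀ i, ((vs.zip vs.tail).map (w i)).sum ≤ L i
    let scaledFeas : List V → Prop := fun vs =>
      ∀ i, ((vs.zip vs.tail).map (wbar i)).sum ≤ (1 + ε i) * L i
    (∀ vs, IsPath vs → origFeas vs → scaledFeas vs) ∧
    (∀ vs, IsPath vs → scaledFeas vs →
      ∀ i, ((vs.zip vs.tail).map (w i)).sum ≤ (1 + ε i) * L i) ∧
    ((∃ vs, IsPath vs ∧ origFeas vs) → ∃ vs, IsPath vs ∧ scaledFeas vs) ∧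
    (∀ Q, IsPath Q → scaledFeas Q →
      (∀ Q', IsPath Q' → scaledFeas Q' → cost Q ≤ cost Q') →
      (∀ P, IsPath P → origFeas P → cost Q ≤ cost P) ∧
        ∀ i, ((Q.zip Q.tail).map (w i)).sum ≤ (1 + ε i) * L i) := by
  intro Δ wbar IsPath cost origFeas scaledFeas
  have hn1 : (0 : ℝ) < (n : ℝ) - 1 := by
    have : (2 : ℝ) ≤ n := by exact_mod_cast hn
    linarith
  have hΔ : ∀ i, 0 < Δ i := fun i => div_pos (hεL i) hn1
  have ha : ∀ vs, IsPath vs → origFeas vs → scaledFeas vs := by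
    intro vs hP hO i
    have hlen : ((vs.zip vs.tail).length : ℝ) ≤ (n : ℝ) - 1 := by
      have h1 : vs.length ≤ n := hcard ▸ hP.2.2.1.length_le_card
      have h2 : (vs.zip vs.tail).length + 1 ≤ n := by
        simp only [List.length_zip, List.length_tail]
        omega
      have h3 : ((vs.zip vs.tail).length : ℝ) + 1 ≤ n := by exact_mod_cast h2
      linarith
    have hsum := sum_map_le_add_length_mul (wbar i) (w i) (Δ i)
      (fun e => roundUp_le (hΔ i) (w i e)) (vs.zip vs.tail)
    have hmul := mul_le_mul_of_nonneg_right hlen (hΔ i).le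
    have hΔn : ((n : ℝ) - 1) * Δ i = ε i * L i := mul_div_cancel₀ _ hn1.ne'
    linarith [hO i]
  have hb : ∀ vs, IsPath vs → scaledFeas vs →
      ∀ i, ((vs.zip vs.tail).map (w i)).sum ≤ (1 + ε i) * L i := fun vs _ hS i =>
    (List.sum_le_sum fun e _ => le_roundUp (hΔ i) (w i e)).trans (hS i)
  exact ⟨ha, hb, fun ⟨vs, hP, hO⟩ => ⟨vs, hP, ha vs hP hO⟩,
    fun Q hQ hS hmin => ⟨fun P hP hO => hmin P hP (ha P hP hO), hb Q hQ hS⟩⟩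
end

section
/- Let V be a finite set with a distinguished source s ∈ V, let E ⊆ V × V be a set of directed edges with costs c : E → ℝ with c(e) ≥ 0, and for each edge e let d(e) ∈ ℤ^m be its (integer) weight vector. Define DP : V × ℤ^m × ℕ → [0, ∞] by: DP(v, η, 0) = 0 if v = s and η_i ≥ 0 for every i, and DP(v, η, 0) = ∞ otherwise; and DP(v, η, h+1) = min( DP(v, η, h), min over edges (u,v) ∈ E of ( DP(u, η − d(u,v), h) + c(u,v) ) ). Then for every v ∈ V, η ∈ ℤ^m and h ∈ ℕ, DP(v, η, h) equals the infimum, over all walks from s to v using at most h edges whose total weight vector ∑_{e ∈ walk} d(e) is componentwise at most η, of the total cost ∑_{e ∈ walk} c(e) (the infimum being ∞ if no such walk exists). -/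
/-!
Writing a walk with at least one edge as a shorter walk to `u` followed by a last edge `(u, v)`,
the recursion for `DP` mirrors the possible last edges of a walk. Two facts, both proved by
induction on the hop bound, give the claim: every feasible walk costs at least the table entry
(`DP_le_of_feasible`), and a finite table entry is the cost of some feasible walk
(`DP_eq_top_or_feasible`). Since `V` is finite, the minimum over last edges is attained, so the
infimum over walks is in fact a minimum whenever it is finite.
-/

open scoped BigOperators

/-- The Bellman–Ford-style dynamic programming table for resource-constrained shortest
paths with integer weight vectors: `DP s E c d v η h` is defined by
`DP v η 0 = 0` if `v = s` and `η` is componentwise nonnegative (else `∞`), and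
`DP v η (h+1) = min (DP v η h) (min over edges (u,v) ∈ E of (DP u (η − d (u,v)) h + c (u,v)))`. -/
noncomputable def DP {V : Type*} [Fintype V] [DecidableEq V] {m : ℕ} (s : V)
    (E : Finset (V × V)) (c : V × V → ℝ) (d : V × V → Fin m → ℤ) :
    V → (Fin m → ℤ) → ℕ → EReal
  | v, η, 0 => if v = s ∧ ∀ i, 0 ≤ η i then (0 : EReal) else ⊤
  | v, η, h + 1 =>
      DP s E c d v η h ⊓
        (Finset.univ.filter fun u : V => (u, v) ∈ E).inf
          fun u => DP s E c d u (η - d (u, v)) h + ((c (u, v) : ℝ) : EReal)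

/-- The vertex list `vs` is a walk from `s` to `v` in `E` with at most `h` edges and with total
weight componentwise at most `η`. The edges of the walk are the entries of `vs.zip vs.tail`. -/
def Feasible {V : Type*} {m : ℕ} (s : V) (E : Finset (V × V)) (d : V × V → Fin m → ℤ)
    (v : V) (η : Fin m → ℤ) (h : ℕ) (vs : List V) : Prop :=
  vs.head? = some s ∧ vs.getLast? = some v ∧
    vs.IsChain (fun a b => (a, b) ∈ E) ∧
    (vs.zip vs.tail).length ≤ h ∧
    ∀ i, ((vs.zip vs.tail).map fun e => d e i).sum ≤ η i

/-- Appending a vertex `v` to a walk ending in `u` appends the edge `(u, v)` to its edge list. -/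
lemma zip_tail_append {V : Type*} (us : List V) (u v : V) :
    ((us ++ [u]) ++ [v]).zip ((us ++ [u]) ++ [v]).tail =
      (us ++ [u]).zip (us ++ [u]).tail ++ [(u, v)] := by
  induction us with
  | nil => simp
  | cons a us ih =>
    cases us with
    | nil => simp
    | cons b us => simpa using ih

/-- A walk with at most `h + 1` edges whose last edge is `(u, v)` is feasible exactly when the
walk without this edge is feasible for the budget reduced by `d (u, v)`. -/
lemma feasible_append {V : Type*} {m : ℕ} (s : V) (E : Finset (V × V))
    (d : V × V → Fin m → ℤ) (u v : V) (η : Fin m → ℤ) (h : ℕ) (us : List V) :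
    Feasible s E d v η (h + 1) ((us ++ [u]) ++ [v]) ↔
      (u, v) ∈ E ∧ Feasible s E d u (η - d (u, v)) h (us ++ [u]) := by
  have hhead : ((us ++ [u]) ++ [v]).head? = (us ++ [u]).head? := by
    cases us <;> simp
  have hchain : ((us ++ [u]) ++ [v]).IsChain (fun a b => (a, b) ∈ E) ↔
      (us ++ [u]).IsChain (fun a b => (a, b) ∈ E) ∧ (u, v) ∈ E := by
    rw [List.isChain_append]
    simp
  unfold Feasible
  rw [zip_tail_append, hhead, hchain, List.length_append]
  simp only [List.getLast?_concat, List.map_append, List.sum_append, List.map_cons,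
    List.map_nil, List.sum_singleton, List.length_singleton, Pi.sub_apply, le_sub_iff_add_le,
    add_le_add_iff_right, true_and]
  tauto

lemma Feasible.exists_eq_append {V : Type*} {m : ℕ} {s : V} {E : Finset (V × V)}
    {d : V × V → Fin m → ℤ} {v : V} {η : Fin m → ℤ} {h : ℕ} {vs : List V}
    (hvs : Feasible s E d v η h vs) : ∃ us, vs = us ++ [v] :=
  List.getLast?_eq_some_iff.1 hvs.2.1

lemma DP_le_zero {V : Type*} [Fintype V] [DecidableEq V] {m : ℕ} (s : V)
    (E : Finset (V × V)) (c : V × V → ℝ) (d : V × V → Fin m → ℤ) (η : Fin m → ℤ)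
    (hη : ∀ i, 0 ≤ η i) (h : ℕ) : DP s E c d s η h ≤ 0 := by
  induction h with
  | zero => simp [DP, hη]
  | succ h ih =>
    rw [DP]
    exact inf_le_left.trans ih

/-- Optimality: the table entry is a lower bound for the cost of every feasible walk. -/
lemma DP_le_of_feasible {V : Type*} [Fintype V] [DecidableEq V] {m : ℕ} (s : V)
    (E : Finset (V × V)) (c : V × V → ℝ) (d : V × V → Fin m → ℤ) (h : ℕ) :
    ∀ (v : V) (η : Fin m → ℤ) (vs : List V), Feasible s E d v η h vs →
      DP s E c d v η h ≤ ((((vs.zip vs.tail).map c).sum : ℝ) : EReal) := by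
  induction h with
  | zero =>
    intro v η vs hvs
    obtain ⟨us, rfl⟩ := hvs.exists_eq_append
    rcases List.eq_nil_or_concat us with rfl | ⟨ws, u, rfl⟩
    · obtain ⟨h1, -, -, -, h5⟩ := hvs
      obtain rfl : v = s := by simpa using h1
      simpa using DP_le_zero v E c d η (by simpa using h5) 0
    · have := hvs.2.2.2.1
      rw [List.concat_eq_append, zip_tail_append] at this
      simp at this
  | succ h ih =>
    intro v η vs hvs
    obtain ⟨us, rfl⟩ := hvs.exists_eq_append
    rcases List.eq_nil_or_concat us with rfl | ⟨ws, u, rfl⟩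
    · obtain ⟨h1, -, -, -, h5⟩ := hvs
      obtain rfl : v = s := by simpa using h1
      simpa using DP_le_zero v E c d η (by simpa using h5) (h + 1)
    · rw [List.concat_eq_append] at hvs ⊢
      obtain ⟨huv, hws⟩ := (feasible_append ..).1 hvs
      rw [zip_tail_append, List.map_append, List.sum_append, List.map_singleton,
        List.sum_singleton, EReal.coe_add, DP]
      refine inf_le_right.trans ((Finset.inf_le (b := u) (by simpa using huv)).trans ?_)
      exact add_le_add_left (ih u _ _ hws) _

/-- Soundness: a finite table entry is the cost of some feasible walk. -/
lemma DP_eq_top_or_feasible {V : Type*} [Fintype V] [DecidableEq V] {m : ℕ} (s : V)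
    (E : Finset (V × V)) (c : V × V → ℝ) (d : V × V → Fin m → ℤ) (h : ℕ) :
    ∀ (v : V) (η : Fin m → ℤ), DP s E c d v η h = ⊤ ∨ ∃ vs : List V,
      Feasible s E d v η h vs ∧
        DP s E c d v η h = ((((vs.zip vs.tail).map c).sum : ℝ) : EReal) := by
  induction h with
  | zero =>
    intro v η
    by_cases hv : v = s ∧ ∀ i, 0 ≤ η i
    · right
      obtain ⟨rfl, hη⟩ := hv
      exact ⟨[v], by simp [Feasible, hη], by simp [DP, hη]⟩
    · left
      rw [DP, if_neg hv]
  | succ h ih =>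
    intro v η
    rw [DP]
    rcases min_choice (DP s E c d v η h)
      ((Finset.univ.filter fun u : V => (u, v) ∈ E).inf
        fun u => DP s E c d u (η - d (u, v)) h + ((c (u, v) : ℝ) : EReal)) with hmin | hmin
    · rw [hmin]
      refine (ih v η).imp_right ?_
      rintro ⟨vs, ⟨h1, h2, h3, h4, h5⟩, hcost⟩
      exact ⟨vs, ⟨h1, h2, h3, h4.trans h.le_succ, h5⟩, hcost⟩
    · rw [hmin]
      rcases (Finset.univ.filter fun u : V => (u, v) ∈ E).eq_empty_or_nonempty with he | hne
      · left
        rw [he, Finset.inf_empty]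
      · obtain ⟨u, hu, hinf⟩ := Finset.exists_mem_eq_inf _ hne
          fun u => DP s E c d u (η - d (u, v)) h + ((c (u, v) : ℝ) : EReal)
        rw [hinf]
        rcases ih u (η - d (u, v)) with htop | ⟨vs, hvs, hcost⟩
        · left
          rw [htop, EReal.top_add_coe]
        · right
          obtain ⟨us, rfl⟩ := hvs.exists_eq_append
          refine ⟨(us ++ [u]) ++ [v],
            (feasible_append ..).2 ⟨(Finset.mem_filter.1 hu).2, hvs⟩, ?_⟩
          rw [hcost, zip_tail_append, List.map_append, List.sum_append, List.map_singleton,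
            List.sum_singleton, EReal.coe_add]

/-- The dynamic program `DP` computes, for every vertex `v`, pattern
`η ∈ ℤ^m`, and hop bound `h`, exactly the infimum of the total cost over all walks
from `s` to `v` using at most `h` edges whose total weight vector is componentwise at
most `η` (the infimum over `EReal` being `∞ = ⊤` if no such walk exists). -/
theorem stmt11 {V : Type*} [Fintype V] [DecidableEq V] {m : ℕ} (s : V)
    (E : Finset (V × V)) (c : V × V → ℝ) (hc : ∀ e ∈ E, 0 ≤ c e)
    (d : V × V → Fin m → ℤ) (v : V) (η : Fin m → ℤ) (h : ℕ) :
    DP s E c d v η h =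
      sInf {x : EReal | ∃ vs : List V,
        vs.head? = some s ∧ vs.getLast? = some v ∧
        vs.Chain' (fun a b => (a, b) ∈ E) ∧
        (vs.zip vs.tail).length ≤ h ∧
        (∀ i, ((vs.zip vs.tail).map fun e => d e i).sum ≤ η i) ∧
        x = ((((vs.zip vs.tail).map c).sum : ℝ) : EReal)} := by
  apply le_antisymm
  · refine le_sInf ?_
    rintro x ⟨vs, h1, h2, h3, h4, h5, rfl⟩
    exact DP_le_of_feasible s E c d h v η vs ⟨h1, h2, h3, h4, h5⟩
  · rcases DP_eq_top_or_feasible s E c d h v η with htop | ⟨vs, ⟨h1, h2, h3, h4, h5⟩, hcost⟩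
    · rw [htop]
      exact le_top
    · exact sInf_le ⟨vs, h1, h2, h3, h4, h5, hcost⟩
end
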